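/- arXiv:1710.02329 — 3 statements merged into one kernel-verified Lean document; each statement's English description precedes it below -/
import Mathlib

section
/- Let A be a complete deterministic register automaton with k registers over an infinite data domain D, let q_1, q_2 be configurations of A, and let X ⊆ D be a set of exactly 2k + 1 data values containing every register value of q_1 and every register value of q_2. If there exists a data word w with |post({q_1, q_2}, w)| = 1, then there exists a data word w' ∈ (Σ × X)^* with |post({q_1, q_2}, w')| = 1. -/
open scoped Classical

/-- Register constraints over a set `R` of registers: built from the atom `true` and
atoms `= r` for `r ∈ R` using conjunction and negation. -/
inductive RC (R : Type) : Type
  | tt : RC R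
  | req : R → RC R
  | conj : RC R → RC R → RC R
  | neg : RC R → RC R

/-- Satisfaction of a register constraint by a register valuation `ν` and a datum `d`. -/
def RC.sat {R D : Type} (ν : R → D) (d : D) : RC R → Prop
  | RC.tt => True
  | RC.req r => ν r = d
  | RC.conj φ ψ => RC.sat ν d φ ∧ RC.sat ν d ψ
  | RC.neg φ => ¬ RC.sat ν d φ

/-- A configuration: a location together with a register valuation. -/
abbrev Config (L R D : Type) : Type := L × (R → D)

/-- A transition: source location, letter, guard, update set, target location. -/
abbrev RATrans (L A R : Type) : Type := L × A × RC R × Set R × L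

/-- The update `ν[up := d]` of a register valuation. -/
noncomputable def updVal {R D : Type} (ν : R → D) (up : Set R) (d : D) : R → D :=
  fun r => if r ∈ up then d else ν r

/-- One-step successor relation of the register automaton with transition relation `T`:
`Step T q (a, d) q'` holds iff `q' ∈ post(q, (a, d))`. -/
def Step {L A R D : Type} (T : Set (RATrans L A R)) (q : Config L R D) (i : A × D)
    (q' : Config L R D) : Prop :=
  ∃ (φ : RC R) (up : Set R) (ℓ' : L),
    (q.1, i.1, φ, up, ℓ') ∈ T ∧ RC.sat q.2 i.2 φ ∧ q' = (ℓ', updVal q.2 up i.2)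

/-- `post` of a set of configurations on a single input. -/
def postStep {L A R D : Type} (T : Set (RATrans L A R)) (S : Set (Config L R D)) (i : A × D) :
    Set (Config L R D) :=
  {q' | ∃ q ∈ S, Step T q i q'}

/-- `post` of a set of configurations on a data word. -/
def postWord {L A R D : Type} (T : Set (RATrans L A R)) (S : Set (Config L R D)) :
    List (A × D) → Set (Config L R D)
  | [] => S
  | i :: w => postWord T (postStep T S i) w

/-- Completeness: every configuration has at least one successor on every input. -/
def RAComplete (D : Type) {L A R : Type} (T : Set (RATrans L A R)) : Prop :=
  ∀ (q : Config L R D) (i : A × D), ∃ q', Step T q i q'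

/-- Determinism: every configuration has at most one successor on every input. -/
def RADet (D : Type) {L A R : Type} (T : Set (RATrans L A R)) : Prop :=
  ∀ (q : Config L R D) (i : A × D) (q₁ q₂ : Config L R D),
    Step T q i q₁ → Step T q i q₂ → q₁ = q₂

/-- The set of data values occurring in a data word. -/
def dataSet {A D : Type} (w : List (A × D)) : Set D := {d | ∃ p ∈ w, p.2 = d}

/-- A synchronizing data word: a nonempty data word sending the set of all
configurations to a single configuration. -/
def IsSync (D : Type) {L A R : Type} (T : Set (RATrans L A R)) (w : List (A × D)) : Prop :=
  w ≠ [] ∧ ∃ q : Config L R D, postWord T (Set.univ : Set (Config L R D)) w = {q}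

/-!
Relabelling the data by an injection commutes with `post`, and in a deterministic automaton a set
of `n` configurations never grows, so it always stores at most `n * k` data values. As long as the
stored values lie in a set `X` with more elements than that, an input datum outside `X` can be
swapped with an element of `X` that is not currently stored: the swap fixes the current
configurations, so it merely relabels their successors. Hence every word can be imitated, up to a
permutation of the data, by a word over `X`.
-/

section Relabel

variable {L A R D E : Type} {f : D → E}

/-- The configuration obtained by renaming the stored data values along `f`. -/
def Config.relabel (f : D → E) (q : Config L R D) : Config L R E :=
  (q.1, f ∘ q.2)

theorem RC.sat_comp_iff (hf : Function.Injective f) (ν : R → D) (d : D) (φ : RC R) :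
    RC.sat (f ∘ ν) (f d) φ ↔ RC.sat ν d φ := by
  induction φ with
  | tt => exact Iff.rfl
  | req r => exact hf.eq_iff
  | conj φ ψ ihφ ihψ => exact and_congr ihφ ihψ
  | neg φ ih => exact not_congr ih

theorem comp_updVal (f : D → E) (ν : R → D) (up : Set R) (d : D) :
    f ∘ updVal ν up d = updVal (f ∘ ν) up (f d) :=
  funext fun r => apply_ite f (r ∈ up) d (ν r)

theorem step_relabel_iff (hf : Function.Injective f) {T : Set (RATrans L A R)}
    {q : Config L R D} {a : A} {d : D} {q' : Config L R E} :
    Step T (q.relabel f) (a, f d) q' ↔ ∃ p, Step T q (a, d) p ∧ p.relabel f = q' := by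
  constructor
  · rintro ⟨φ, up, ℓ', hT, hsat, rfl⟩
    exact ⟨(ℓ', updVal q.2 up d), ⟨φ, up, ℓ', hT, (RC.sat_comp_iff hf _ _ _).1 hsat, rfl⟩,
      Prod.ext rfl (comp_updVal f _ _ _)⟩
  · rintro ⟨p, ⟨φ, up, ℓ', hT, hsat, rfl⟩, rfl⟩
    exact ⟨φ, up, ℓ', hT, (RC.sat_comp_iff hf _ _ _).2 hsat, Prod.ext rfl (comp_updVal f _ _ _)⟩

theorem postStep_image_relabel (hf : Function.Injective f) (T : Set (RATrans L A R))
    (S : Set (Config L R D)) (a : A) (d : D) :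
    postStep T (Config.relabel f '' S) (a, f d) = Config.relabel f '' postStep T S (a, d) := by
  ext q'
  constructor
  · rintro ⟨_, ⟨q, hq, rfl⟩, hstep⟩
    obtain ⟨p, hp, rfl⟩ := (step_relabel_iff hf).1 hstep
    exact ⟨p, ⟨q, hq, hp⟩, rfl⟩
  · rintro ⟨p, ⟨q, hq, hp⟩, rfl⟩
    exact ⟨q.relabel f, ⟨q, hq, rfl⟩, (step_relabel_iff hf).2 ⟨p, hp, rfl⟩⟩

end Relabel

section Post

variable {L A R D : Type} {T : Set (RATrans L A R)}

theorem postWord_append (T : Set (RATrans L A R)) (S : Set (Config L R D))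
    (u v : List (A × D)) : postWord T S (u ++ v) = postWord T (postWord T S u) v := by
  induction u generalizing S with
  | nil => rfl
  | cons i _ ih => exact ih (postStep T S i)

theorem encard_postStep_le (hdet : RADet D T) (S : Set (Config L R D)) (i : A × D) :
    (postStep T S i).encard ≤ S.encard := by
  have hpred : ∀ q' ∈ postStep T S i, ∃ q ∈ S, Step T q i q' := fun _ h => h
  choose! pred hpredS hpredStep using hpred
  refine Set.encard_le_encard_of_injOn hpredS fun p hp q hq hpq => ?_
  exact hdet (pred p) i p q (hpredStep p hp) (hpq ▸ hpredStep q hq)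

theorem encard_postWord_le (hdet : RADet D T) (S : Set (Config L R D)) (w : List (A × D)) :
    (postWord T S w).encard ≤ S.encard := by
  induction w generalizing S with
  | nil => exact le_rfl
  | cons i w ih => exact (ih _).trans (encard_postStep_le hdet S i)

/-- The set of data values stored in the registers of the configurations in `S`. -/
def registerValues (S : Set (Config L R D)) : Set D :=
  {d | ∃ q ∈ S, ∃ r, q.2 r = d}

theorem encard_registerValues_le (S : Set (Config L R D)) :
    (registerValues S).encard ≤ S.encard * ENat.card R := by
  have hsub : registerValues S ⊆ (fun p : Config L R D × R => p.1.2 p.2) '' S ×ˢ Set.univ := by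
    rintro _ ⟨q, hq, r, rfl⟩
    exact ⟨(q, r), ⟨hq, Set.mem_univ r⟩, rfl⟩
  calc (registerValues S).encard
      ≤ (S ×ˢ (Set.univ : Set R)).encard :=
        (Set.encard_le_encard hsub).trans (Set.encard_image_le _ _)
    _ = S.encard * ENat.card R := by rw [Set.encard_prod, Set.encard_univ]

theorem registerValues_postStep_subset {S : Set (Config L R D)} {X : Set D} {i : A × D}
    (hS : registerValues S ⊆ X) (hi : i.2 ∈ X) : registerValues (postStep T S i) ⊆ X := by
  rintro _ ⟨_, ⟨q, hq, φ, up, ℓ', -, -, rfl⟩, r, rfl⟩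
  by_cases hr : r ∈ up
  · simpa only [updVal, if_pos hr] using hi
  · simpa only [updVal, if_neg hr] using hS ⟨q, hq, r, rfl⟩

theorem registerValues_postWord_subset {S : Set (Config L R D)} {X : Set D} {w : List (A × D)}
    (hS : registerValues S ⊆ X) (hw : ∀ p ∈ w, p.2 ∈ X) : registerValues (postWord T S w) ⊆ X := by
  induction w generalizing S with
  | nil => exact hS
  | cons i w ih =>
    obtain ⟨hi, hw⟩ := List.forall_mem_cons.1 hw
    exact ih (registerValues_postStep_subset hS hi) hw

theorem image_relabel_eq_self {f : D → D} {S : Set (Config L R D)}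
    (hf : Set.EqOn f id (registerValues S)) : Config.relabel f '' S = S :=
  Set.EqOn.image_eq_self fun q hq => Prod.ext rfl (funext fun r => hf ⟨q, hq, r, rfl⟩)

end Post

theorem exists_perm_eqOn_id_and_apply_mem {D : Type*} {V X : Set D} (hVX : V ⊂ X) (d : D) :
    ∃ σ : Equiv.Perm D, Set.EqOn σ id V ∧ σ d ∈ X := by
  by_cases hd : d ∈ X
  · exact ⟨1, fun _ _ => rfl, hd⟩
  · obtain ⟨x, hxX, hxV⟩ := Set.exists_of_ssubset hVX
    refine ⟨Equiv.swap d x, fun v hv => ?_, by rwa [Equiv.swap_apply_left]⟩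
    have hvd : v ≠ d := ne_of_mem_of_not_mem (hVX.subset hv) hd
    have hvx : v ≠ x := ne_of_mem_of_not_mem hv hxV
    exact Equiv.swap_apply_of_ne_of_ne hvd hvx

theorem encard_pair_mul_card_lt_encard {α β R : Type*} [Fintype R] {X : Set β}
    (hX : X.ncard = 2 * Fintype.card R + 1) (a b : α) :
    ({a, b} : Set α).encard * ENat.card R < X.encard := by
  have hpair : ({a, b} : Set α).encard ≤ 2 := by
    simpa only [Set.encard_singleton, one_add_one_eq_two] using Set.encard_insert_le {b} a
  have hXfin : X.Finite := Set.finite_of_ncard_ne_zero (by omega)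
  calc ({a, b} : Set α).encard * ENat.card R
      ≤ 2 * ENat.card R := mul_le_mul_left hpair _
    _ = ((2 * Fintype.card R : ℕ) : ℕ∞) := by rw [ENat.card_eq_coe_fintype_card]; norm_cast
    _ < X.encard := by rw [← hXfin.cast_ncard_eq, hX]; exact_mod_cast Nat.lt_succ_self _

section Imitation

variable {L A R D : Type} {T : Set (RATrans L A R)} {S : Set (Config L R D)} {X : Set D}

theorem registerValues_postWord_ssubset (hdet : RADet D T)
    (hcard : S.encard * ENat.card R < X.encard) (hS : registerValues S ⊆ X)
    {w : List (A × D)} (hw : ∀ p ∈ w, p.2 ∈ X) : registerValues (postWord T S w) ⊂ X := by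
  have hlt : (registerValues (postWord T S w)).encard < X.encard :=
    calc (registerValues (postWord T S w)).encard
        ≤ (postWord T S w).encard * ENat.card R := encard_registerValues_le _
      _ ≤ S.encard * ENat.card R := mul_le_mul_left (encard_postWord_le hdet S w) _
      _ < X.encard := hcard
  exact (registerValues_postWord_subset hS hw).ssubset_of_ne (ne_of_apply_ne Set.encard hlt.ne)

theorem exists_postWord_eq_image_relabel (hdet : RADet D T)
    (hcard : S.encard * ENat.card R < X.encard) (hS : registerValues S ⊆ X) (w : List (A × D)) :
    ∃ w' : List (A × D), (∀ p ∈ w', p.2 ∈ X) ∧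
      ∃ π : Equiv.Perm D, postWord T S w' = Config.relabel π '' postWord T S w := by
  induction w using List.reverseRecOn with
  | nil => exact ⟨[], List.forall_mem_nil _, 1, (Set.image_id S).symm⟩
  | append_singleton w i ih =>
    obtain ⟨a, d⟩ := i
    obtain ⟨w', hw', π, hπ⟩ := ih
    obtain ⟨σ, hσ, hσX⟩ := exists_perm_eqOn_id_and_apply_mem
      (registerValues_postWord_ssubset hdet hcard hS hw') (π d)
    have hfix : postWord T S w' = Config.relabel (σ * π) '' postWord T S w :=
      calc postWord T S w' = Config.relabel σ '' postWord T S w' := (image_relabel_eq_self hσ).symm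
        _ = Config.relabel σ '' (Config.relabel π '' postWord T S w) := by rw [hπ]
        _ = Config.relabel (σ * π) '' postWord T S w := Set.image_image _ _ _
    refine ⟨w' ++ [(a, σ (π d))], ?_, σ * π, ?_⟩
    · exact List.forall_mem_append.2 ⟨hw', List.forall_mem_singleton.2 hσX⟩
    · calc postWord T S (w' ++ [(a, σ (π d))])
          = postStep T (Config.relabel (σ * π) '' postWord T S w) (a, (σ * π) d) := by
            rw [postWord_append, hfix]; rfl
        _ = Config.relabel (σ * π) '' postStep T (postWord T S w) (a, d) :=
            postStep_image_relabel (σ * π).injective T _ a d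
        _ = Config.relabel (σ * π) '' postWord T S (w ++ [(a, d)]) := by
            rw [postWord_append]; rfl

end Imitation

theorem stmt3_general {L A R D : Type} (T : Set (RATrans L A R)) (hdet : RADet D T)
    (S : Set (Config L R D)) (X : Set D) (hX : S.encard * ENat.card R < X.encard)
    (hS : ∀ q ∈ S, ∀ r : R, q.2 r ∈ X)
    (hmerge : ∃ (w : List (A × D)) (q : Config L R D), postWord T S w = {q}) :
    ∃ w' : List (A × D), (∀ p ∈ w', p.2 ∈ X) ∧
      ∃ q : Config L R D, postWord T S w' = {q} := by
  obtain ⟨w, q, hw⟩ := hmerge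
  have hSX : registerValues S ⊆ X := by
    rintro _ ⟨p, hp, r, rfl⟩
    exact hS p hp r
  obtain ⟨w', hw', π, hπ⟩ := exists_postWord_eq_image_relabel hdet hX hSX w
  exact ⟨w', hw', q.relabel π, by rw [hπ, hw, Set.image_singleton]⟩

/-- given a complete `k`-DRA, configurations `q₁, q₂`, and a set `X` of
exactly `2k + 1` data values containing all register values of `q₁` and `q₂`, if some
data word merges `q₁` and `q₂` into a single configuration, then some data word using
only data from `X` does so as well. -/
theorem stmt3 {L A R D : Type} [Fintype L] [Fintype A] [Fintype R] [Infinite D]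
    (T : Set (RATrans L A R))
    (hcomp : RAComplete D T) (hdet : RADet D T)
    (q₁ q₂ : Config L R D) (X : Set D)
    (hX : X.ncard = 2 * Fintype.card R + 1)
    (hq₁ : ∀ r : R, q₁.2 r ∈ X) (hq₂ : ∀ r : R, q₂.2 r ∈ X)
    (hmerge : ∃ (w : List (A × D)) (q : Config L R D), postWord T {q₁, q₂} w = {q}) :
    ∃ w' : List (A × D), (∀ p ∈ w', p.2 ∈ X) ∧
      ∃ q : Config L R D, postWord T {q₁, q₂} w' = {q} := by
  refine stmt3_general T hdet {q₁, q₂} X (encard_pair_mul_card_lt_encard hX q₁ q₂) ?_ hmerge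
  rintro _ (rfl | rfl)
  exacts [hq₁, hq₂]
end

section
/- For every n ≥ 1 and pairwise distinct data values x_1, ..., x_{n+1} ∈ D, the data word w = (a, x_1)(a, x_2)⋯(a, x_{n+1}) is synchronizing for the deterministic register automaton R_n (defined in the context); more precisely, post(L × D^n, w) = {(synch, ν)} where ν assigns x_{n+1} to every register. In particular, R_n has a synchronizing data word of data efficiency exactly n + 1. -/
open scoped Classical

/-- Locations of the DRA `R_{n+1}` from the paper: `init`, `synch`, and two chains
`left i` (= `ℓ_{i+1}`) and `right i` (= `ℓ'_{i+1}`) for `i : Fin (n+1)`. -/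
inductive RnLoc (n : ℕ) : Type
  | init : RnLoc n
  | synch : RnLoc n
  | left : Fin (n + 1) → RnLoc n
  | right : Fin (n + 1) → RnLoc n

/-- Disjunction of register constraints, expressed via conjunction and negation. -/
def RC.or {R : Type} (φ ψ : RC R) : RC R := RC.neg (RC.conj (RC.neg φ) (RC.neg ψ))

/-- The constraint `⋁_{r ∈ l} (= r)` (an empty disjunction is false). -/
def bigOrEq {R : Type} (l : List R) : RC R :=
  l.foldr (fun r acc => RC.or (RC.req r) acc) (RC.neg RC.tt)

/-- The constraint `⋀_{r ∈ l} ¬(= r)`. -/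
def bigAndNeq {R : Type} (l : List R) : RC R :=
  l.foldr (fun r acc => RC.conj (RC.neg (RC.req r)) acc) RC.tt

/-- The registers `r_1, …, r_{i+1}`, i.e. all `j ≤ i`. -/
def regsUpTo (n : ℕ) (i : Fin (n + 1)) : List (Fin (n + 1)) :=
  (List.finRange (n + 1)).filter (fun j => j ≤ i)

/-- The transitions of the DRA `R_{n+1}` from the paper (all over the single letter
`()`), with registers `Fin (n+1)`. -/
inductive RnTrans (n : ℕ) : RATrans (RnLoc n) Unit (Fin (n + 1)) → Prop
  | initL : RnTrans n (RnLoc.init, (), RC.req 0, {0}, RnLoc.left 0)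
  | initR : RnTrans n (RnLoc.init, (), RC.neg (RC.req 0), {0}, RnLoc.right 0)
  | loopL (i : Fin (n + 1)) :
      RnTrans n (RnLoc.left i, (), bigOrEq (regsUpTo n i), ∅, RnLoc.left i)
  | loopR (i : Fin (n + 1)) :
      RnTrans n (RnLoc.right i, (), bigOrEq (regsUpTo n i), ∅, RnLoc.right i)
  | stepL (i : Fin (n + 1)) (h : (i : ℕ) < n) :
      RnTrans n (RnLoc.left i, (), bigAndNeq (regsUpTo n i),
        {⟨(i : ℕ) + 1, Nat.succ_lt_succ h⟩}, RnLoc.left ⟨(i : ℕ) + 1, Nat.succ_lt_succ h⟩)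
  | stepR (i : Fin (n + 1)) (h : (i : ℕ) < n) :
      RnTrans n (RnLoc.right i, (), bigAndNeq (regsUpTo n i),
        {⟨(i : ℕ) + 1, Nat.succ_lt_succ h⟩}, RnLoc.right ⟨(i : ℕ) + 1, Nat.succ_lt_succ h⟩)
  | lastL : RnTrans n (RnLoc.left (Fin.last n), (), bigAndNeq (regsUpTo n (Fin.last n)),
      Set.univ, RnLoc.synch)
  | lastR : RnTrans n (RnLoc.right (Fin.last n), (), bigAndNeq (regsUpTo n (Fin.last n)),
      Set.univ, RnLoc.synch)
  | synchLoop : RnTrans n (RnLoc.synch, (), RC.tt, Set.univ, RnLoc.synch)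

/-- The transition relation of `R_{n+1}` as a set. -/
def RnT (n : ℕ) : Set (RATrans (RnLoc n) Unit (Fin (n + 1))) := {t | RnTrans n t}

/-!
Give every configuration a bound on the number of pairwise distinct data it can still read before
it reaches `synch`. In `left i` or `right i` this is the number `m + 1 - i` of remaining forward
moves plus the number of registers `j ≤ i` whose value still occurs in the unread input. A loop is
taken only when the datum is the value of such a register; since data do not repeat, that register
stops counting and the second summand drops. A forward move stores a datum that never returns, so
it lowers the first summand without raising the second. Hence each letter lowers the bound until it
is `0`, and it never exceeds `m + 2`. Every transition into `synch` overwrites all registers with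
the current datum, so the last letter determines the final valuation.
-/

section Automata

variable {L A R D : Type}

theorem sat_bigOrEq {ν : R → D} {d : D} {l : List R} :
    RC.sat ν d (bigOrEq l) ↔ ∃ r ∈ l, ν r = d := by
  induction l with
  | nil => simp [bigOrEq, RC.sat]
  | cons r l ih =>
    change ¬(¬ν r = d ∧ ¬RC.sat ν d (bigOrEq l)) ↔ _
    rw [ih, List.exists_mem_cons_iff, ← not_or, not_not]

theorem sat_bigAndNeq {ν : R → D} {d : D} {l : List R} :
    RC.sat ν d (bigAndNeq l) ↔ ∀ r ∈ l, ν r ≠ d := by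
  induction l with
  | nil => simp [bigAndNeq, RC.sat]
  | cons r l ih =>
    change ¬ν r = d ∧ RC.sat ν d (bigAndNeq l) ↔ _
    rw [ih, List.forall_mem_cons]

theorem sat_bigAndNeq_iff_not_sat_bigOrEq {ν : R → D} {d : D} {l : List R} :
    RC.sat ν d (bigAndNeq l) ↔ ¬RC.sat ν d (bigOrEq l) := by
  simp [sat_bigAndNeq, sat_bigOrEq]

theorem updVal_empty (ν : R → D) (d : D) : updVal ν ∅ d = ν := by
  funext r
  simp [updVal]

theorem updVal_univ (ν : R → D) (d : D) : updVal ν Set.univ d = fun _ => d := by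
  funext r
  simp [updVal]

theorem postWord_concat (T : Set (RATrans L A R)) (S : Set (Config L R D)) (w : List (A × D))
    (i : A × D) : postWord T S (w ++ [i]) = postStep T (postWord T S w) i := by
  induction w generalizing S with
  | nil => rfl
  | cons j _ ih => exact ih (postStep T S j)

theorem RAComplete.postWord_nonempty {T : Set (RATrans L A R)} (hT : RAComplete D T)
    {S : Set (Config L R D)} (hS : S.Nonempty) (w : List (A × D)) :
    (postWord T S w).Nonempty := by
  induction w generalizing S with
  | nil => exact hS
  | cons i _ ih =>
    obtain ⟨q, hq⟩ := hS
    obtain ⟨q', hstep⟩ := hT q i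
    exact ih ⟨q', q, hq, hstep⟩

theorem mem_dataSet {w : List (A × D)} {d : D} : d ∈ dataSet w ↔ d ∈ w.map Prod.snd :=
  List.mem_map.symm

theorem dataSet_cons (i : A × D) (w : List (A × D)) :
    dataSet (i :: w) = insert i.2 (dataSet w) := by
  ext d
  simp only [mem_dataSet, List.map_cons, List.mem_cons, Set.mem_insert_iff]

theorem ncard_dataSet {w : List (A × D)} (hw : (w.map Prod.snd).Nodup) :
    (dataSet w).ncard = w.length := by
  have hdata : dataSet w = ((w.map Prod.snd).toFinset : Set D) := by
    ext d
    rw [mem_dataSet, Finset.mem_coe, List.mem_toFinset]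
  rw [hdata, Set.ncard_coe_finset, List.toFinset_card_of_nodup hw, List.length_map]

end Automata

section Chain

variable {D : Type} {m : ℕ}

theorem mem_regsUpTo {i j : Fin (m + 1)} : j ∈ regsUpTo m i ↔ j ≤ i := by
  simp [regsUpTo]

theorem exists_step_left (i : Fin (m + 1)) (ν : Fin (m + 1) → D) (d : D) :
    ∃ q, Step (RnT m) (.left i, ν) ((), d) q := by
  by_cases hmem : RC.sat ν d (bigOrEq (regsUpTo m i))
  · exact ⟨_, _, _, _, .loopL i, hmem, rfl⟩
  · have hfresh := sat_bigAndNeq_iff_not_sat_bigOrEq.2 hmem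
    obtain rfl | hi := i.le_last.eq_or_lt
    · exact ⟨_, _, _, _, .lastL, hfresh, rfl⟩
    · exact ⟨_, _, _, _, .stepL i hi, hfresh, rfl⟩

theorem exists_step_right (i : Fin (m + 1)) (ν : Fin (m + 1) → D) (d : D) :
    ∃ q, Step (RnT m) (.right i, ν) ((), d) q := by
  by_cases hmem : RC.sat ν d (bigOrEq (regsUpTo m i))
  · exact ⟨_, _, _, _, .loopR i, hmem, rfl⟩
  · have hfresh := sat_bigAndNeq_iff_not_sat_bigOrEq.2 hmem
    obtain rfl | hi := i.le_last.eq_or_lt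
    · exact ⟨_, _, _, _, .lastR, hfresh, rfl⟩
    · exact ⟨_, _, _, _, .stepR i hi, hfresh, rfl⟩

theorem raComplete_RnT (D : Type) (m : ℕ) : RAComplete D (RnT m) := by
  rintro ⟨ℓ, ν⟩ ⟨⟨⟩, d⟩
  cases ℓ with
  | init =>
    by_cases h : ν 0 = d
    · exact ⟨_, _, _, _, .initL, h, rfl⟩
    · exact ⟨_, _, _, _, .initR, h, rfl⟩
  | synch => exact ⟨_, _, _, _, .synchLoop, trivial, rfl⟩
  | left i => exact exists_step_left i ν d
  | right i => exact exists_step_right i ν d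

theorem eq_const_of_step_synch {q : Config (RnLoc m) (Fin (m + 1)) D} {d : D}
    {ν : Fin (m + 1) → D} (h : Step (RnT m) q ((), d) (.synch, ν)) : ν = fun _ => d := by
  obtain ⟨ℓ, μ⟩ := q
  obtain ⟨φ, up, ℓ', ht, -, heq⟩ := h
  obtain ⟨rfl, rfl⟩ := Prod.mk.inj heq
  cases ht <;> exact updVal_univ μ d

/-- The registers among the first `i + 1` whose value lies in the set `Y` of data still to be read:
those that can cause a loop at `left i` or `right i` in the future. -/
noncomputable def pendingRegs (Y : Set D) (ν : Fin (m + 1) → D) (i : Fin (m + 1)) :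
    Finset (Fin (m + 1)) :=
  {j ∈ Finset.Iic i | ν j ∈ Y}

theorem mem_pendingRegs {Y : Set D} {ν : Fin (m + 1) → D} {i j : Fin (m + 1)} :
    j ∈ pendingRegs Y ν i ↔ j ≤ i ∧ ν j ∈ Y := by
  simp [pendingRegs]

theorem card_pendingRegs_le (Y : Set D) (ν : Fin (m + 1) → D) (i : Fin (m + 1)) :
    (pendingRegs Y ν i).card ≤ i + 1 :=
  (Finset.card_filter_le _ _).trans_eq (Fin.card_Iic i)

theorem pendingRegs_ssubset_insert {Y : Set D} {ν : Fin (m + 1) → D} {i : Fin (m + 1)} {d : D}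
    (hd : d ∉ Y) (hmem : ∃ j ≤ i, ν j = d) :
    pendingRegs Y ν i ⊂ pendingRegs (insert d Y) ν i := by
  obtain ⟨j, hji, rfl⟩ := hmem
  refine Finset.ssubset_iff_of_subset ?_ |>.2 ⟨j, ?_, ?_⟩
  · exact fun r hr =>
      mem_pendingRegs.2 ((mem_pendingRegs.1 hr).imp_right (Set.mem_insert_of_mem _))
  · exact mem_pendingRegs.2 ⟨hji, Set.mem_insert _ _⟩
  · exact fun hj => hd (mem_pendingRegs.1 hj).2

theorem pendingRegs_updVal_singleton {Y : Set D} {d : D} (hd : d ∉ Y) (ν : Fin (m + 1) → D)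
    (i : Fin (m + 1)) :
    pendingRegs Y (updVal ν {i} d) i = {j ∈ Finset.Iio i | ν j ∈ Y} := by
  ext j
  rw [mem_pendingRegs, Finset.mem_filter, Finset.mem_Iio]
  obtain rfl | hne := eq_or_ne j i
  · simp [updVal, hd]
  · simp [updVal, hne, lt_iff_le_and_ne]

theorem card_pendingRegs_loop_lt {Y : Set D} {ν : Fin (m + 1) → D} {i : Fin (m + 1)} {d : D}
    (hd : d ∉ Y) (hsat : RC.sat ν d (bigOrEq (regsUpTo m i))) :
    (pendingRegs Y (updVal ν ∅ d) i).card < (pendingRegs (insert d Y) ν i).card := by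
  rw [updVal_empty]
  refine Finset.card_lt_card (pendingRegs_ssubset_insert hd ?_)
  simpa only [mem_regsUpTo] using sat_bigOrEq.1 hsat

theorem card_pendingRegs_init {Y : Set D} {d : D} (hd : d ∉ Y) (ν : Fin (m + 1) → D) :
    (pendingRegs Y (updVal ν {0} d) 0).card = 0 := by
  rw [pendingRegs_updVal_singleton hd, ← bot_eq_zero, Finset.Iio_bot, Finset.filter_empty,
    Finset.card_empty]

theorem card_pendingRegs_forward_le {Y : Set D} {d : D} (hd : d ∉ Y) (ν : Fin (m + 1) → D)
    {i i' : Fin (m + 1)} (hi : (i' : ℕ) = i + 1) :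
    (pendingRegs Y (updVal ν {i'} d) i').card ≤ (pendingRegs (insert d Y) ν i).card := by
  rw [pendingRegs_updVal_singleton hd]
  refine Finset.card_le_card fun j hj => ?_
  obtain ⟨hji, hjY⟩ := Finset.mem_filter.1 hj
  have hji' : j ≤ i := by
    rw [Finset.mem_Iio, Fin.lt_def] at hji
    exact Fin.le_def.2 (by omega)
  exact mem_pendingRegs.2 ⟨hji', Set.mem_insert_of_mem d hjY⟩

/-- An upper bound on the number of letters a configuration of `RnT m` needs to reach `synch` along
a word with pairwise distinct data, `Y` being the set of these data. -/
noncomputable def synchDelay (Y : Set D) : Config (RnLoc m) (Fin (m + 1)) D → ℕ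
  | (.init, _) => m + 2
  | (.synch, _) => 0
  | (.left i, ν) | (.right i, ν) => m + 1 - i + (pendingRegs Y ν i).card

theorem synchDelay_le (Y : Set D) (q : Config (RnLoc m) (Fin (m + 1)) D) :
    synchDelay Y q ≤ m + 2 := by
  obtain ⟨_ | _ | i | i, ν⟩ := q <;> simp only [synchDelay, le_refl, zero_le]
  all_goals
    have := card_pendingRegs_le Y ν i
    omega

theorem fst_eq_synch_of_synchDelay_eq_zero {Y : Set D} {q : Config (RnLoc m) (Fin (m + 1)) D}
    (h : synchDelay Y q = 0) : q.1 = .synch := by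
  obtain ⟨_ | _ | i | i, ν⟩ := q <;> simp only [synchDelay] at h ⊢ <;> omega

theorem synchDelay_le_pred_of_step {Y : Set D} {d : D} (hd : d ∉ Y)
    {q q' : Config (RnLoc m) (Fin (m + 1)) D} (h : Step (RnT m) q ((), d) q') :
    synchDelay Y q' ≤ synchDelay (insert d Y) q - 1 := by
  obtain ⟨ℓ, ν⟩ := q
  obtain ⟨φ, up, ℓ', ht, hsat, rfl⟩ := h
  cases ht with
  | initL | initR => simp [synchDelay, card_pendingRegs_init hd]
  | loopL i | loopR i =>
    have := card_pendingRegs_loop_lt (ν := ν) hd hsat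
    simp only [synchDelay]
    omega
  | stepL i hi | stepR i hi =>
    have := card_pendingRegs_forward_le hd ν (i := i) (i' := ⟨i + 1, Nat.succ_lt_succ hi⟩) rfl
    simp only [synchDelay]
    omega
  | lastL | lastR | synchLoop => exact Nat.zero_le _

theorem synchDelay_le_of_mem_postWord {w : List (Unit × D)} (hw : (w.map Prod.snd).Nodup)
    {S : Set (Config (RnLoc m) (Fin (m + 1)) D)} {b : ℕ}
    (hS : ∀ q ∈ S, synchDelay (dataSet w) q ≤ b) :
    ∀ q ∈ postWord (RnT m) S w, synchDelay ∅ q ≤ b - w.length := by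
  induction w generalizing S b with
  | nil => simpa [dataSet, postWord] using hS
  | cons i w ih =>
    obtain ⟨hi, hw⟩ := List.nodup_cons.1 hw
    have hpost : ∀ q' ∈ postStep (RnT m) S i, synchDelay (dataSet w) q' ≤ b - 1 := by
      rintro q' ⟨q, hq, hstep⟩
      have hdelay := hS q hq
      rw [dataSet_cons] at hdelay
      exact (synchDelay_le_pred_of_step (mt mem_dataSet.1 hi) hstep).trans
        (Nat.sub_le_sub_right hdelay 1)
    intro q hq
    rw [List.length_cons, Nat.add_comm, ← Nat.sub_sub]
    exact ih hw hpost q hq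

theorem fst_eq_synch_of_mem_postWord {w : List (Unit × D)} (hw : (w.map Prod.snd).Nodup)
    (hlen : m + 2 ≤ w.length) {S : Set (Config (RnLoc m) (Fin (m + 1)) D)}
    {q : Config (RnLoc m) (Fin (m + 1)) D} (hq : q ∈ postWord (RnT m) S w) : q.1 = .synch := by
  have hdelay := synchDelay_le_of_mem_postWord hw (fun q _ => synchDelay_le _ q) q hq
  exact fst_eq_synch_of_synchDelay_eq_zero (Y := ∅) (by omega)

theorem postWord_RnT_concat_eq_singleton {w : List (Unit × D)} {d : D}
    (hw : ((w ++ [((), d)]).map Prod.snd).Nodup) (hlen : m + 1 ≤ w.length)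
    {S : Set (Config (RnLoc m) (Fin (m + 1)) D)} (hS : S.Nonempty) :
    postWord (RnT m) S (w ++ [((), d)]) = {(.synch, fun _ => d)} := by
  refine Set.eq_singleton_iff_nonempty_unique_mem.2
    ⟨(raComplete_RnT D m).postWord_nonempty hS _, ?_⟩
  rintro ⟨ℓ, ν⟩ hq
  obtain rfl : ℓ = .synch := fst_eq_synch_of_mem_postWord hw (by simpa using hlen) hq
  rw [postWord_concat] at hq
  obtain ⟨p, -, hstep⟩ := hq
  rw [eq_const_of_step_synch hstep]

end Chain

theorem stmt7_general {D : Type} {m k : ℕ} (hk : m + 1 ≤ k) (x : Fin (k + 1) → D)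
    (hx : Function.Injective x) :
    IsSync D (RnT m) ((List.finRange (k + 1)).map (fun i => ((), x i))) ∧
    postWord (RnT m) (Set.univ : Set (Config (RnLoc m) (Fin (m + 1)) D))
        ((List.finRange (k + 1)).map (fun i => ((), x i)))
      = {((RnLoc.synch : RnLoc m), fun _ : Fin (m + 1) => x (Fin.last k))} ∧
    (dataSet ((List.finRange (k + 1)).map (fun i => ((), x i)))).ncard = k + 1 := by
  set w : List (Unit × D) := (List.finRange (k + 1)).map fun i => ((), x i) with hw
  have hnodup : (w.map Prod.snd).Nodup := by
    rw [hw, List.map_map]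
    exact (List.nodup_finRange _).map hx
  have hconcat : w =
      (List.finRange k).map (fun i => ((), x i.castSucc)) ++ [((), x (Fin.last k))] := by
    simp [hw, List.finRange_succ_last, Function.comp_def]
  have hpost : postWord (RnT m) (Set.univ : Set (Config (RnLoc m) (Fin (m + 1)) D)) w
      = {(.synch, fun _ => x (Fin.last k))} := by
    rw [hconcat] at hnodup ⊢
    exact postWord_RnT_concat_eq_singleton hnodup (by simpa using hk)
      ⟨(.synch, fun _ => x 0), Set.mem_univ _⟩
  exact ⟨⟨by simp [hw], _, hpost⟩, hpost, (ncard_dataSet hnodup).trans (by simp [hw])⟩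

/-- for every `n ≥ 1` (here `n = m + 1`) and pairwise distinct data values
`x 0, …, x (n)` (that is, `n + 1 = m + 2` of them), the data word
`(a, x 0)(a, x 1)⋯(a, x (m+1))` is synchronizing for `R_{m+1}`, and more precisely
`post(L × D^{m+1}, w) = {(synch, ν)}` where `ν` assigns `x (m+1)` to every register;
in particular its data efficiency is exactly `m + 2`. -/
theorem stmt7 {D : Type} [Infinite D] (m : ℕ)
    (x : Fin (m + 2) → D) (hx : Function.Injective x) :
    IsSync D (RnT m) ((List.finRange (m + 2)).map (fun i => ((), x i))) ∧
    postWord (RnT m) (Set.univ : Set (Config (RnLoc m) (Fin (m + 1)) D))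
        ((List.finRange (m + 2)).map (fun i => ((), x i)))
      = {((RnLoc.synch : RnLoc m), fun _ : Fin (m + 1) => x (Fin.last (m + 1)))} ∧
    (dataSet ((List.finRange (m + 2)).map (fun i => ((), x i)))).ncard = m + 2 :=
  stmt7_general le_rfl x hx
end

section
/- Define tower : ℕ → ℕ by tower(0) = 1 and tower(m + 1) = 2^{tower(m)}. For every n ≥ 1 there exists a complete nondeterministic register automaton with a single register, over an alphabet with 6 letters and with at most n + 6 locations, that admits a synchronizing data word and such that every synchronizing data word w satisfies |data(w)| ≥ tower(n). -/
open scoped Classical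

/-- The tower function: `tower 0 = 1`, `tower (m+1) = 2 ^ tower m`. -/
def tower : ℕ → ℕ
  | 0 => 1
  | m + 1 => 2 ^ tower m

/-!
After a word has been read, the configurations reached form a set of tokens, each a location with
a datum, and synchronizing is a game against these tokens. The automaton makes them implement a
counter: a finite set `B` of data at `current`. To double it, each `d` in `B` is moved to `next`
together with a second datum not yet in `next`; when `current` is empty, the copy replaces `B` and
one datum is removed from the set `A` at `outer`. When `A` is exhausted, `B` has been doubled as
many times as `A` had elements, and the next stage starts with `A := B` and a one-element counter.
Hence `B` grows to `tower (j + 1)` elements in stage `j`, and the last of the `n` stages can be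
finished, which merges the token of the stage with the one in the sink, only when the counter
holds `tower n` different data. Every illegal input brings back the tokens of the initial
position, so there is no shortcut.
-/

section General

variable {L A R D : Type}

theorem postStep_mono (T : Set (RATrans L A R)) (i : A × D) {S S' : Set (Config L R D)}
    (h : S ⊆ S') : postStep T S i ⊆ postStep T S' i :=
  fun _ ⟨q, hq, hstep⟩ => ⟨q, h hq, hstep⟩

theorem exists_mem_dataSet {w : List (A × D)} (hw : w ≠ []) : ∃ d, d ∈ dataSet w :=
  have ⟨i, hi⟩ := List.exists_mem_of_ne_nil w hw
  ⟨i.2, i, hi, rfl⟩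

theorem dataSet_finite (w : List (A × D)) : (dataSet w).Finite :=
  (w.finite_toSet.image Prod.snd).subset fun _ ⟨i, hi, hid⟩ => ⟨i, hi, hid⟩

theorem postWord_induction {T : Set (RATrans L A R)} {P : Set (Config L R D) → Prop}
    {X : Set D} (hP : ∀ S i, i.2 ∈ X → P S → P (postStep T S i))
    {w : List (A × D)} (hw : dataSet w ⊆ X) {S : Set (Config L R D)} (hS : P S) :
    P (postWord T S w) := by
  induction w generalizing S with
  | nil => exact hS
  | cons i w ih =>
    have hwX : dataSet w ⊆ X := fun _ ⟨p, hp, hpd⟩ => hw ⟨p, List.mem_cons_of_mem i hp, hpd⟩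
    exact ih hwX (hP S i (hw ⟨i, List.mem_cons_self, rfl⟩) hS)

end General

section Relabelling

variable {L L' A A' R D : Type}

/-- The register automaton obtained by renaming locations along `g` and letters along `f`. It is
pulled back from `T`, so that several letters of `A'` may play the role of one letter of `A`. -/
def comapRA (g : L' → L) (f : A' → A) (T : Set (RATrans L A R)) : Set (RATrans L' A' R) :=
  {t | (g t.1, f t.2.1, t.2.2.1, t.2.2.2.1, g t.2.2.2.2) ∈ T}

theorem step_comapRA_iff (g : L' ≃ L) (f : A' → A) (T : Set (RATrans L A R))
    (q q' : Config L' R D) (i : A' × D) :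
    Step (comapRA g f T) q i q' ↔
      Step T (Prod.map g id q) (Prod.map f id i) (Prod.map g id q') := by
  constructor
  · rintro ⟨φ, up, ℓ', hT, hφ, rfl⟩
    exact ⟨φ, up, g ℓ', hT, hφ, rfl⟩
  · rintro ⟨φ, up, ℓ', hT, hφ, hq'⟩
    obtain ⟨rfl, hν'⟩ := Prod.mk.inj hq'
    exact ⟨φ, up, q'.1, hT, hφ, Prod.ext rfl hν'⟩

theorem postStep_comapRA (g : L' ≃ L) (f : A' → A) (T : Set (RATrans L A R))
    (S : Set (Config L R D)) (i : A' × D) :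
    postStep (comapRA g f T) (Prod.map g id ⁻¹' S) i =
      Prod.map g id ⁻¹' postStep T S (Prod.map f id i) := by
  ext q'
  constructor
  · rintro ⟨q, hq, hstep⟩
    exact ⟨_, hq, (step_comapRA_iff g f T q q' i).1 hstep⟩
  · rintro ⟨q, hq, hstep⟩
    obtain ⟨q, rfl⟩ := (g.surjective.prodMap Function.surjective_id) q
    exact ⟨q, hq, (step_comapRA_iff g f T q q' i).2 hstep⟩

theorem postWord_comapRA (g : L' ≃ L) (f : A' → A) (T : Set (RATrans L A R))
    (S : Set (Config L R D)) (w : List (A' × D)) :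
    postWord (comapRA g f T) (Prod.map g id ⁻¹' S) w =
      Prod.map g id ⁻¹' postWord T S (w.map (Prod.map f id)) := by
  induction w generalizing S with
  | nil => rfl
  | cons i w ih => simp only [postWord, List.map_cons, postStep_comapRA, ih]

theorem isSync_comapRA_iff (g : L' ≃ L) (f : A' → A) (T : Set (RATrans L A R))
    (w : List (A' × D)) :
    IsSync D (comapRA g f T) w ↔ IsSync D T (w.map (Prod.map f id)) := by
  let e : Config L' R D ≃ Config L R D := g.prodCongr (Equiv.refl (R → D))
  have hpost : postWord (comapRA g f T) Set.univ w =
      e ⁻¹' postWord T Set.univ (w.map (Prod.map f id)) := postWord_comapRA g f T Set.univ w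
  simp only [IsSync, ne_eq, List.map_eq_nil_iff, hpost, e.preimage_eq_iff_eq_image,
    Set.image_singleton]
  exact and_congr_right fun _ => e.exists_congr fun _ => Iff.rfl

theorem RAComplete.comapRA {T : Set (RATrans L A R)} (hT : RAComplete D T) (g : L' ≃ L)
    (f : A' → A) : RAComplete D (comapRA g f T) := by
  intro q i
  obtain ⟨q', hstep⟩ := hT (Prod.map g id q) (Prod.map f id i)
  obtain ⟨q', rfl⟩ := (g.surjective.prodMap Function.surjective_id) q'
  exact ⟨q', (step_comapRA_iff g f T q q' i).2 hstep⟩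

theorem dataSet_map (f : A' → A) (w : List (A' × D)) :
    dataSet (w.map (Prod.map f id)) = dataSet w := by
  ext d
  simp [dataSet]

end Relabelling

section Table

/-- The move to location `ℓ` that leaves the register unchanged. -/
abbrev keep {L : Type} (ℓ : L) : L × Bool := (ℓ, false)

/-- The move to location `ℓ` that stores the current datum in the register. -/
abbrev store {L : Type} (ℓ : L) : L × Bool := (ℓ, true)

variable {L A D : Type} {δ : A → L → Prop → Set (L × Bool)}

/-- The one-register automaton with transition table `δ`. The entry `δ a ℓ e` lists the moves on
letter `a` in location `ℓ`, where `e` says whether the register holds the current datum. A move is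
a target location with a flag telling whether the datum is stored. -/
def ofTable (δ : A → L → Prop → Set (L × Bool)) : Set (RATrans L A Unit) :=
  {t | ∃ (e : Prop) (u : Bool), (t.2.2.2.2, u) ∈ δ t.2.1 t.1 e ∧
    t.2.2.1 = (if e then RC.req () else RC.neg (RC.req ())) ∧
    t.2.2.2.1 = {_r | u = true}}

theorem step_ofTable_iff {q q' : Config L Unit D} {a : A} {d : D} :
    Step (ofTable δ) q (a, d) q' ↔
      ∃ u, (q'.1, u) ∈ δ a q.1 (q.2 () = d) ∧ q'.2 () = if u then d else q.2 () := by
  have sat_test (e : Prop) :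
      RC.sat q.2 d (if e then RC.req () else RC.neg (RC.req ())) ↔ (q.2 () = d) = e := by
    by_cases he : e <;> simp [RC.sat, he]
  constructor
  · rintro ⟨_, _, ℓ', ⟨e, u, hδ, rfl, rfl⟩, hsat, rfl⟩
    obtain rfl := (sat_test e).1 hsat
    exact ⟨u, hδ, by simp [updVal]⟩
  · rintro ⟨u, hδ, hval⟩
    exact ⟨_, {_r | u = true}, q'.1, ⟨_, u, hδ, rfl, rfl⟩, (sat_test _).2 rfl,
      Prod.ext rfl (funext fun _ => by simpa [updVal] using hval)⟩

theorem mem_postStep_ofTable_iff {S : Set (Config L Unit D)} {a : A} {d : D} {ℓ' : L}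
    {ν' : Unit → D} :
    (ℓ', ν') ∈ postStep (ofTable δ) S (a, d) ↔
      ∃ ℓ, ((ℓ, ν') ∈ S ∧ keep ℓ' ∈ δ a ℓ (ν' () = d)) ∨
        (ν' () = d ∧ ∃ x, (ℓ, fun _ => x) ∈ S ∧ store ℓ' ∈ δ a ℓ (x = d)) := by
  constructor
  · rintro ⟨⟨ℓ, ν⟩, hS, hstep⟩
    obtain ⟨_ | _, hmove, hval⟩ := step_ofTable_iff.1 hstep
    · obtain rfl : ν' = ν := funext fun _ => hval
      exact ⟨ℓ, .inl ⟨hS, hmove⟩⟩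
    · exact ⟨ℓ, .inr ⟨hval, ν (), hS, hmove⟩⟩
  · rintro ⟨ℓ, ⟨hS, hmove⟩ | ⟨hval, x, hS, hmove⟩⟩
    · exact ⟨(ℓ, ν'), hS, step_ofTable_iff.2 ⟨false, hmove, rfl⟩⟩
    · exact ⟨(ℓ, fun _ => x), hS, step_ofTable_iff.2 ⟨true, hmove, hval⟩⟩

theorem raComplete_ofTable (hδ : ∀ a ℓ e, (δ a ℓ e).Nonempty) : RAComplete D (ofTable δ) := by
  rintro ⟨ℓ, ν⟩ ⟨a, d⟩
  obtain ⟨⟨ℓ', u⟩, hmove⟩ := hδ a ℓ (ν () = d)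
  exact ⟨(ℓ', fun _ => if u then d else ν ()), step_ofTable_iff.2 ⟨u, hmove, rfl⟩⟩

end Table

/-- The alphabet of the tower automaton. -/
inductive TowerLetter
  | move | fresh | round | advance | finish | reset

/-- The locations of the tower automaton with stages `0, …, m`. The data held at `current` are
the counter being doubled, those at `next` its copy under construction, `pending` marks an element
whose second copy is still to be chosen, and the data at `outer` are the doublings left to do. -/
inductive TowerLoc (m : ℕ)
  | sink | outer | current | next | pending | stage (j : Fin (m + 1))

/-- The enumeration of the alphabet of the tower automaton. -/
def towerLetter : Fin 6 → TowerLetter := ![.move, .fresh, .round, .advance, .finish, .reset]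

theorem towerLetter_surjective : Function.Surjective towerLetter := by
  rintro (_ | _ | _ | _ | _ | _)
  exacts [⟨0, rfl⟩, ⟨1, rfl⟩, ⟨2, rfl⟩, ⟨3, rfl⟩, ⟨4, rfl⟩, ⟨5, rfl⟩]

namespace TowerLoc

variable {m : ℕ}

/-- The stages and the five other locations of the tower automaton. -/
def ofSum (m : ℕ) : Fin 5 ⊕ Fin (m + 1) → TowerLoc m :=
  Sum.elim ![.sink, .outer, .current, .next, .pending] .stage

theorem ofSum_bijective (m : ℕ) : Function.Bijective (ofSum m) := by
  constructor
  · rintro (i | i) (j | j) h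
    · fin_cases i <;> fin_cases j <;> first | rfl | cases h
    · fin_cases i <;> cases h
    · fin_cases j <;> cases h
    · cases h; rfl
  · rintro (_ | _ | _ | _ | _ | j)
    exacts [⟨.inl 0, rfl⟩, ⟨.inl 1, rfl⟩, ⟨.inl 2, rfl⟩, ⟨.inl 3, rfl⟩, ⟨.inl 4, rfl⟩,
      ⟨.inr j, rfl⟩]

/-- A numbering of the `m + 6` locations of the tower automaton. -/
noncomputable def finEquiv (m : ℕ) : Fin (5 + (m + 1)) ≃ TowerLoc m :=
  finSumFinEquiv.symm.trans (Equiv.ofBijective (ofSum m) (ofSum_bijective m))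

protected theorem exists_iff {p : TowerLoc m → Prop} :
    (∃ ℓ, p ℓ) ↔ p .sink ∨ p .outer ∨ p .current ∨ p .next ∨ p .pending ∨ ∃ j, p (.stage j) := by
  constructor
  · rintro ⟨_ | _ | _ | _ | _ | j, h⟩
    exacts [.inl h, .inr (.inl h), .inr (.inr (.inl h)), .inr (.inr (.inr (.inl h))),
      .inr (.inr (.inr (.inr (.inl h)))), .inr (.inr (.inr (.inr (.inr ⟨j, h⟩))))]
  · rintro (h | h | h | h | h | ⟨_, h⟩) <;> exact ⟨_, h⟩

end TowerLoc

/-- The penalty for an illegal input: the whole computation starts again from stage `0`. -/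
def restartMoves (m : ℕ) : Set (TowerLoc m × Bool) :=
  {store .outer, store .current, store (.stage 0)}

/-- The transition table of the tower automaton, in the format of `ofTable`. -/
noncomputable def towerTable (m : ℕ) :
    TowerLetter → TowerLoc m → Prop → Set (TowerLoc m × Bool)
  | _, .sink, _ => {store .sink}
  | .move, .outer, _ => {keep .outer}
  | .move, .current, e => if e then {keep .next, keep .pending} else {keep .current}
  | .move, .next, e => if e then restartMoves m else {keep .next}
  | .move, .stage j, _ => {store (.stage j)}
  | .fresh, .outer, _ => {keep .outer}
  | .fresh, .current, _ => {keep .current}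
  | .fresh, .next, e => if e then restartMoves m else {keep .next}
  | .fresh, .pending, e => if e then restartMoves m else {store .next}
  | .fresh, .stage j, _ => {store (.stage j)}
  | .round, .outer, e => if e then {store .sink} else {keep .outer}
  | .round, .next, _ => {keep .current}
  | .round, .stage j, _ => {store (.stage j)}
  | .advance, .current, _ => {keep .outer}
  | .advance, .stage j, _ =>
      if j = Fin.last m then restartMoves m else {store (.stage (j + 1)), store .current}
  | .finish, .current, _ => {store .sink}
  | .finish, .stage j, _ => if j = Fin.last m then {store .sink} else restartMoves m
  | _, _, _ => restartMoves m

/-- The tower automaton with stages `0, …, m`. -/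
def towerRA (m : ℕ) : Set (RATrans (TowerLoc m) TowerLetter Unit) :=
  ofTable (towerTable m)

theorem raComplete_towerRA (m : ℕ) (D : Type) : RAComplete D (towerRA m) := by
  refine raComplete_ofTable fun a ℓ e => ?_
  rcases a <;> rcases ℓ <;> simp only [towerTable, restartMoves] <;>
    (try split_ifs) <;> simp only [Set.insert_nonempty, Set.singleton_nonempty]

/-- A position of the counting game played on the tower automaton: the set of data held at each
counter location, the current stage, and the last datum read, held at the stage and in the sink. -/
structure TowerBoard (m : ℕ) (D : Type) where
  datum : D
  stage : Fin (m + 1)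
  outer : Finset D
  current : Finset D
  next : Finset D
  pending : Finset D

namespace TowerBoard

variable {m : ℕ} {D : Type} {b : TowerBoard m D} {d : D} {X : Finset D}

/-- The data held at each location in the position `b`. -/
def content (b : TowerBoard m D) : TowerLoc m → Set D
  | .sink => {b.datum}
  | .outer => b.outer
  | .current => b.current
  | .next => b.next
  | .pending => b.pending
  | .stage j => {x | j = b.stage ∧ x = b.datum}

/-- The set of configurations of the tower automaton encoded by `b`. -/
def configs (b : TowerBoard m D) : Set (Config (TowerLoc m) Unit D) :=
  {q | q.2 () ∈ b.content q.1}

/-- The position reached by the letter `move`. -/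
noncomputable def move (b : TowerBoard m D) (d : D) : TowerBoard m D :=
  { b with
    datum := d
    current := b.current.erase d
    next := b.next ∪ b.current ∩ {d}
    pending := b.current ∩ {d} }

/-- The position reached by the letter `fresh`. -/
noncomputable def fresh (b : TowerBoard m D) (d : D) : TowerBoard m D :=
  { b with
    datum := d
    next := if b.pending.Nonempty then insert d b.next else b.next
    pending := ∅ }

/-- The position reached by the letter `round`. -/
noncomputable def round (b : TowerBoard m D) (d : D) : TowerBoard m D :=
  { b with datum := d, outer := b.outer.erase d, current := b.next, next := ∅ }

/-- The position reached by the letter `advance`. -/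
def advance (b : TowerBoard m D) (d : D) : TowerBoard m D :=
  { b with datum := d, stage := b.stage + 1, outer := b.current, current := {d} }

/-- The initial position, reached by a `reset` on datum `d`. -/
def start (m : ℕ) (d : D) : TowerBoard m D where
  datum := d
  stage := 0
  outer := {d}
  current := {d}
  next := ∅
  pending := ∅

/-- No configuration of `b` is penalized on the input `(a, d)`. -/
def Legal (b : TowerBoard m D) : TowerLetter → D → Prop
  | .move, d => b.pending = ∅ ∧ d ∉ b.next
  | .fresh, d => d ∉ b.next ∧ d ∉ b.pending
  | .round, _ => b.current = ∅ ∧ b.pending = ∅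
  | .advance, _ => b.stage ≠ Fin.last m ∧ b.outer = ∅ ∧ b.next = ∅ ∧ b.pending = ∅
  | .finish, _ => b.stage = Fin.last m ∧ b.outer = ∅ ∧ b.next = ∅ ∧ b.pending = ∅
  | .reset, _ => False

theorem mem_postStep_configs_iff {a : TowerLetter} {ℓ' : TowerLoc m} {ν' : Unit → D} :
    (ℓ', ν') ∈ postStep (towerRA m) b.configs (a, d) ↔
      ∃ ℓ, (ν' () ∈ b.content ℓ ∧ keep ℓ' ∈ towerTable m a ℓ (ν' () = d)) ∨
        (ν' () = d ∧ ∃ x ∈ b.content ℓ, store ℓ' ∈ towerTable m a ℓ (x = d)) :=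
  mem_postStep_ofTable_iff

theorem postStep_move (h : b.Legal .move d) :
    postStep (towerRA m) b.configs (.move, d) = (b.move d).configs := by
  obtain ⟨hpending, hnext⟩ := h
  ext ⟨ℓ', ν'⟩
  rw [mem_postStep_configs_iff, TowerLoc.exists_iff]
  rcases ℓ' <;>
    simp only [content, towerTable, configs, move, restartMoves, mem_ite, Set.mem_ofPred_eq,
      Set.mem_singleton_iff, Set.mem_insert_iff, Finset.mem_coe, Prod.mk.injEq, reduceCtorEq,
      false_and, and_false] <;>
    grind

theorem postStep_fresh (h : b.Legal .fresh d) :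
    postStep (towerRA m) b.configs (.fresh, d) = (b.fresh d).configs := by
  obtain ⟨hnext, hpending⟩ := h
  ext ⟨ℓ', ν'⟩
  rw [mem_postStep_configs_iff, TowerLoc.exists_iff]
  rcases ℓ' <;>
    simp only [content, towerTable, configs, fresh, restartMoves, mem_ite, Set.mem_ofPred_eq,
      Set.mem_singleton_iff, Set.mem_insert_iff, Finset.mem_coe, Prod.mk.injEq, reduceCtorEq,
      false_and, and_false] <;>
    grind [Finset.Nonempty]

theorem postStep_round (h : b.Legal .round d) :
    postStep (towerRA m) b.configs (.round, d) = (b.round d).configs := by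
  obtain ⟨hcurrent, hpending⟩ := h
  ext ⟨ℓ', ν'⟩
  rw [mem_postStep_configs_iff, TowerLoc.exists_iff]
  rcases ℓ' <;>
    simp only [content, towerTable, configs, round, mem_ite, Set.mem_ofPred_eq,
      Set.mem_singleton_iff, Finset.mem_coe, Prod.mk.injEq, reduceCtorEq, false_and,
      and_false] <;>
    grind

theorem postStep_advance (h : b.Legal .advance d) :
    postStep (towerRA m) b.configs (.advance, d) = (b.advance d).configs := by
  obtain ⟨hstage, houter, hnext, hpending⟩ := h
  ext ⟨ℓ', ν'⟩
  rw [mem_postStep_configs_iff, TowerLoc.exists_iff]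
  rcases ℓ' <;>
    simp only [content, towerTable, configs, advance, mem_ite, Set.mem_ofPred_eq,
      Set.mem_singleton_iff, Set.mem_insert_iff, Finset.mem_coe, Prod.mk.injEq, reduceCtorEq,
      false_and, and_false] <;>
    grind

theorem postStep_finish (h : b.Legal .finish d) :
    postStep (towerRA m) b.configs (.finish, d) = {(.sink, fun _ => d)} := by
  obtain ⟨hstage, houter, hnext, hpending⟩ := h
  ext ⟨ℓ', ν'⟩
  rw [mem_postStep_configs_iff, TowerLoc.exists_iff]
  rcases ℓ' <;>
    simp only [content, towerTable, mem_ite, Set.mem_ofPred_eq, Set.mem_singleton_iff,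
      Finset.mem_coe, Prod.mk.injEq, reduceCtorEq, false_and, and_false] <;>
    grind

theorem postStep_univ_reset (m : ℕ) (d : D) :
    postStep (towerRA m) Set.univ (.reset, d) = (start m d).configs := by
  have : Nonempty D := ⟨d⟩
  ext ⟨ℓ', ν'⟩
  rw [towerRA, mem_postStep_ofTable_iff, TowerLoc.exists_iff]
  rcases ℓ' <;>
    simp only [content, towerTable, configs, start, restartMoves, Set.mem_univ, true_and,
      exists_const, Set.mem_ofPred_eq, Set.mem_singleton_iff, Set.mem_insert_iff,
      Finset.mem_coe, Prod.mk.injEq, reduceCtorEq, false_and, and_false] <;>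
    grind

theorem exists_restart_of_not_legal {a : TowerLetter} (h : ¬ b.Legal a d) :
    ∃ ℓ, ∃ x ∈ b.content ℓ, towerTable m a ℓ (x = d) = restartMoves m := by
  rw [TowerLoc.exists_iff]
  rcases a <;>
    simp only [Legal, content, towerTable, Finset.mem_coe, Set.mem_singleton_iff,
      Set.mem_ofPred_eq] at h ⊢ <;>
    grind

theorem mem_configs_start_iff {ℓ : TowerLoc m} {ν : Unit → D} :
    (ℓ, ν) ∈ (start m d).configs ↔ ν () = d ∧ (ℓ = .sink ∨ store ℓ ∈ restartMoves m) := by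
  rcases ℓ <;> simp [configs, content, start, restartMoves, and_comm]

theorem start_subset_postStep {a : TowerLetter} (h : ¬ b.Legal a d) :
    (start m d).configs ⊆ postStep (towerRA m) b.configs (a, d) := by
  obtain ⟨ℓ, x, hx, hrestart⟩ := exists_restart_of_not_legal h
  rintro ⟨ℓ', ν'⟩ hq
  rw [mem_postStep_configs_iff]
  obtain ⟨hval, rfl | hmove⟩ := mem_configs_start_iff.1 hq
  · exact ⟨.sink, .inr ⟨hval, b.datum, rfl, rfl⟩⟩
  · exact ⟨ℓ, .inr ⟨hval, x, hx, hrestart ▸ hmove⟩⟩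

/-- The player controlling the input can reach a single configuration from `b`. -/
def Winning (b : TowerBoard m D) : Prop :=
  ∃ w q, postWord (towerRA m) b.configs w = {q}

theorem Winning.of_postStep {b' : TowerBoard m D} {i : TowerLetter × D}
    (h : postStep (towerRA m) b.configs i = b'.configs) (hb' : b'.Winning) : b.Winning := by
  obtain ⟨w, q, hw⟩ := hb'
  exact ⟨i :: w, q, by rw [postWord, h, hw]⟩

theorem winning_of_legal_finish (h : b.Legal .finish d) : b.Winning :=
  ⟨[(.finish, d)], _, postStep_finish h⟩

theorem winning_of_current_empty [Infinite D] {j : Fin (m + 1)} {A : Finset D}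
    (h : ∀ (z : D) C, Winning ⟨z, j, A, ∅, C, ∅⟩) (z : D) {B C : Finset D} (hBC : Disjoint B C) :
    Winning ⟨z, j, A, B, C, ∅⟩ := by
  induction B using Finset.induction_on generalizing z C with
  | empty => exact h z C
  | insert d B hdB ih =>
    obtain ⟨hdC, hBC⟩ := Finset.disjoint_insert_left.1 hBC
    obtain ⟨e, he⟩ := Infinite.exists_notMem_finset (insert d (B ∪ C))
    simp only [Finset.mem_insert, Finset.mem_union, not_or] at he
    obtain ⟨hed, heB, heC⟩ := he
    refine .of_postStep (postStep_move (d := d) ⟨rfl, hdC⟩)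
      (.of_postStep (postStep_fresh (d := e) ⟨?_, ?_⟩) ?_)
    · simp [move, heC, hed]
    · simp [move, hed]
    · have hafter : (move ⟨z, j, A, insert d B, C, ∅⟩ d).fresh e =
          ⟨e, j, A, B, insert e (insert d C), ∅⟩ := by
        simp [move, fresh, hdB]
      rw [hafter]
      exact ih e (by simp [hdB, heB, hBC])

theorem winning_of_outer_empty [Infinite D] {j : Fin (m + 1)}
    (h : ∀ (z : D) B, Winning ⟨z, j, ∅, B, ∅, ∅⟩) (z : D) (A B : Finset D) :
    Winning ⟨z, j, A, B, ∅, ∅⟩ := by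
  induction A using Finset.induction_on generalizing z B with
  | empty => exact h z B
  | insert d A hdA ih =>
    refine winning_of_current_empty (fun z C => ?_) z (Finset.disjoint_empty_right B)
    refine .of_postStep (postStep_round (d := d) ⟨rfl, rfl⟩) ?_
    simpa only [round, Finset.erase_insert hdA] using ih d C

theorem winning_of_next_empty [Infinite D] (j : Fin (m + 1)) (z : D) (A B : Finset D) :
    Winning ⟨z, j, A, B, ∅, ∅⟩ := by
  induction j using Fin.reverseInduction generalizing z A B with
  | last =>
    exact winning_of_outer_empty
      (fun z B => winning_of_legal_finish (d := z) ⟨rfl, rfl, rfl, rfl⟩) z A B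
  | cast j ih =>
    refine winning_of_outer_empty (fun z B => ?_) z A B
    refine .of_postStep (postStep_advance (d := z) ⟨j.castSucc_lt_last.ne, rfl, rfl, rfl⟩) ?_
    simpa only [advance, Fin.coeSucc_eq_succ] using ih z B {z}

/-- Twice the size that the current counter is bound to have reached when `outer` has been emptied:
every datum at `outer` stands for one doubling. -/
noncomputable def potential (b : TowerBoard m D) : ℕ :=
  (2 * b.current.card + b.next.card + if b.pending.Nonempty then 1 else 0) * 2 ^ b.outer.card

/-- The invariant of the lower bound: both counters of `b` take their data in `X`, and they are on
the way to the size `tower (j + 1)` that stage `j` demands. -/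
structure LargeIn (X : Finset D) (b : TowerBoard m D) : Prop where
  current_subset : b.current ⊆ X
  next_subset : b.next ⊆ X
  two_mul_tower_le : 2 * tower (b.stage + 1) ≤ b.potential

theorem largeIn_start (m : ℕ) (hd : d ∈ X) : (start m d).LargeIn X where
  current_subset := Finset.singleton_subset_iff.2 hd
  next_subset := Finset.empty_subset X
  two_mul_tower_le := by simp [start, potential, tower]

theorem LargeIn.tower_le_card_current (hb : b.LargeIn X) (houter : b.outer = ∅)
    (hnext : b.next = ∅) (hpending : b.pending = ∅) : tower (b.stage + 1) ≤ b.current.card := by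
  have h := hb.two_mul_tower_le
  simpa [potential, houter, hnext, hpending] using h

theorem potential_move (h : b.Legal .move d) : (b.move d).potential = b.potential := by
  obtain ⟨hpending, hnext⟩ := h
  by_cases hd : d ∈ b.current
  · have hcard := Finset.card_erase_add_one hd
    simp only [potential, move, hpending, Finset.inter_singleton_of_mem hd,
      Finset.union_singleton, Finset.card_insert_of_notMem hnext, Finset.singleton_nonempty,
      Finset.not_nonempty_empty, if_true, if_false]
    congr 1
    lia
  · simp [potential, move, hpending, Finset.erase_eq_of_notMem hd,
      Finset.inter_singleton_of_notMem hd]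

theorem potential_fresh (h : b.Legal .fresh d) : (b.fresh d).potential = b.potential := by
  by_cases hp : b.pending.Nonempty
  · simp [potential, fresh, hp, Finset.card_insert_of_notMem h.1, add_assoc]
  · simp [potential, fresh, hp]

theorem potential_le_round (h : b.Legal .round d) : b.potential ≤ (b.round d).potential := by
  have hcard : b.outer.card ≤ (b.outer.erase d).card + 1 := by
    have := Finset.pred_card_le_card_erase (s := b.outer) (a := d)
    lia
  calc b.potential = b.next.card * 2 ^ b.outer.card := by simp [potential, h.1, h.2]
    _ ≤ b.next.card * 2 ^ ((b.outer.erase d).card + 1) := by gcongr; norm_num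
    _ = (b.round d).potential := by
          simp [potential, round, h.2, pow_succ', mul_left_comm, mul_assoc]

theorem LargeIn.move (hb : b.LargeIn X) (h : b.Legal .move d) :
    (b.move d).LargeIn X where
  current_subset := (Finset.erase_subset d _).trans hb.current_subset
  next_subset :=
    Finset.union_subset hb.next_subset (Finset.inter_subset_left.trans hb.current_subset)
  two_mul_tower_le := hb.two_mul_tower_le.trans_eq (potential_move h).symm

theorem LargeIn.fresh (hd : d ∈ X) (hb : b.LargeIn X) (h : b.Legal .fresh d) :
    (b.fresh d).LargeIn X where
  current_subset := hb.current_subset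
  next_subset := by
    rw [TowerBoard.fresh]
    dsimp only
    split_ifs
    exacts [Finset.insert_subset hd hb.next_subset, hb.next_subset]
  two_mul_tower_le := hb.two_mul_tower_le.trans_eq (potential_fresh h).symm

theorem LargeIn.round (hb : b.LargeIn X) (h : b.Legal .round d) : (b.round d).LargeIn X where
  current_subset := hb.next_subset
  next_subset := Finset.empty_subset X
  two_mul_tower_le := hb.two_mul_tower_le.trans (potential_le_round h)

theorem LargeIn.advance (hd : d ∈ X) (hb : b.LargeIn X) (h : b.Legal .advance d) :
    (b.advance d).LargeIn X where
  current_subset := Finset.singleton_subset_iff.2 hd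
  next_subset := h.2.2.1.trans_subset (Finset.empty_subset X)
  two_mul_tower_le := by
    obtain ⟨hstage, houter, hnext, hpending⟩ := h
    have hval : ((b.stage + 1 : Fin (m + 1)) : ℕ) = b.stage + 1 :=
      Fin.val_add_one_of_lt (Fin.lt_last_iff_ne_last.2 hstage)
    calc 2 * tower ((b.advance d).stage + 1) = 2 * 2 ^ tower (b.stage + 1) := by
          simp only [TowerBoard.advance, hval, tower]
      _ ≤ 2 * 2 ^ b.current.card := by
          gcongr
          · norm_num
          · exact hb.tower_le_card_current houter hnext hpending
      _ = (b.advance d).potential := by simp [potential, TowerBoard.advance, hnext, hpending]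

theorem LargeIn.tower_le_card (hb : b.LargeIn X) (h : b.Legal .finish d) :
    tower (m + 1) ≤ X.card := by
  obtain ⟨hstage, houter, hnext, hpending⟩ := h
  calc tower (m + 1) = tower (b.stage + 1) := by rw [hstage, Fin.val_last]
    _ ≤ b.current.card := hb.tower_le_card_current houter hnext hpending
    _ ≤ X.card := Finset.card_le_card hb.current_subset

theorem not_configs_subset_singleton (q : Config (TowerLoc m) Unit D) : ¬ b.configs ⊆ {q} := by
  intro h
  have hsink : (.sink, fun _ => b.datum) = q := h (Set.mem_singleton _)
  have hstage : (.stage b.stage, fun _ => b.datum) = q := h ⟨rfl, rfl⟩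
  cases hsink.trans hstage.symm

theorem exists_largeIn_postStep (hX : X.card < tower (m + 1)) {i : TowerLetter × D} (hi : i.2 ∈ X)
    (hb : b.LargeIn X) :
    ∃ b' : TowerBoard m D, b'.configs ⊆ postStep (towerRA m) b.configs i ∧ b'.LargeIn X := by
  obtain ⟨a, d⟩ := i
  by_cases h : b.Legal a d
  · cases a with
    | move => exact ⟨b.move d, (postStep_move h).ge, hb.move h⟩
    | fresh => exact ⟨b.fresh d, (postStep_fresh h).ge, hb.fresh hi h⟩
    | round => exact ⟨b.round d, (postStep_round h).ge, hb.round h⟩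
    | advance => exact ⟨b.advance d, (postStep_advance h).ge, hb.advance hi h⟩
    | finish => exact absurd (hb.tower_le_card h) hX.not_ge
    | reset => exact h.elim
  · exact ⟨start m d, start_subset_postStep h, largeIn_start m hi⟩

end TowerBoard

theorem exists_isSync_towerRA (m : ℕ) (D : Type) [Infinite D] :
    ∃ w : List (TowerLetter × D), IsSync D (towerRA m) w := by
  obtain ⟨d⟩ : Nonempty D := inferInstance
  obtain ⟨w, q, hw⟩ : (TowerBoard.start m d).Winning :=
    TowerBoard.winning_of_next_empty 0 d {d} {d}
  exact ⟨(.reset, d) :: w, List.cons_ne_nil _ _, q, by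
    rw [postWord, TowerBoard.postStep_univ_reset, hw]⟩

theorem tower_le_card_of_isSync_towerRA {m : ℕ} {D : Type} {w : List (TowerLetter × D)}
    (hw : IsSync D (towerRA m) w) {X : Finset D} (hX : dataSet w ⊆ X) :
    tower (m + 1) ≤ X.card := by
  obtain ⟨hne, q, hq⟩ := hw
  by_contra! hlt
  obtain ⟨d, hd⟩ := exists_mem_dataSet hne
  obtain ⟨b, hbq, -⟩ : ∃ b : TowerBoard m D,
      b.configs ⊆ postWord (towerRA m) Set.univ w ∧ b.LargeIn X := by
    refine postWord_induction
      (P := fun S => ∃ b : TowerBoard m D, b.configs ⊆ S ∧ b.LargeIn X) ?_ hX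
      ⟨.start m d, Set.subset_univ _, TowerBoard.largeIn_start m (hX hd)⟩
    rintro S i hi ⟨b, hbS, hb⟩
    obtain ⟨b', hb', hlarge⟩ := TowerBoard.exists_largeIn_postStep hlt hi hb
    exact ⟨b', hb'.trans (postStep_mono _ i hbS), hlarge⟩
  exact TowerBoard.not_configs_subset_singleton q (hq ▸ hbq)

/-- for every `n ≥ 1` there is a complete 1-NRA over an alphabet with `6`
letters and at most `n + 6` locations that admits a synchronizing data word and all of
whose synchronizing data words have data efficiency at least `tower n`. -/
theorem stmt11 {D : Type} [Infinite D] (n : ℕ) (hn : 1 ≤ n) :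
    ∃ m : ℕ, m ≤ n + 6 ∧
    ∃ T : Set (RATrans (Fin m) (Fin 6) Unit),
      RAComplete D T ∧
      (∃ w : List (Fin 6 × D), IsSync D T w) ∧
      ∀ w : List (Fin 6 × D), IsSync D T w → tower n ≤ (dataSet w).ncard := by
  obtain ⟨m, rfl⟩ := Nat.exists_eq_add_of_le' hn
  refine ⟨5 + (m + 1), by lia, comapRA (TowerLoc.finEquiv m) towerLetter (towerRA m),
    (raComplete_towerRA m D).comapRA _ _, ?_, fun w hw => ?_⟩
  · obtain ⟨w, hw⟩ := exists_isSync_towerRA m D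
    obtain ⟨w, rfl⟩ :=
      (List.map_surjective_iff.2 (towerLetter_surjective.prodMap Function.surjective_id)) w
    exact ⟨w, (isSync_comapRA_iff _ _ _ w).2 hw⟩
  · rw [isSync_comapRA_iff] at hw
    rw [← dataSet_map towerLetter w, Set.ncard_eq_toFinset_card _ (dataSet_finite _)]
    exact tower_le_card_of_isSync_towerRA hw (dataSet_finite _).coe_toFinset.ge
end
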